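/- There exists a constant C > 0 such that for every R ≥ 0 and every φ ∈ H¹(ℝ², ℂ), the function w'φ := ‖K_R ∗ |φ|²‖² φ + 2 ( K_R ∗ ( (K_R ∗ |φ|²) |φ|² ) ) φ satisfies ‖w'φ‖₂ ≤ C ‖φ‖_{H¹}⁵. (Here ‖K_R ∗ |φ|²‖² is the pointwise squared Euclidean norm of the vector field K_R ∗ |φ|², and in the second term the convolution K_R ∗ ((K_R∗|φ|²)|φ|²) is the scalar function obtained by convolving each component of K_R with the corresponding component of the vector field (K_R∗|φ|²)|φ|² and summing.) -/

import Mathlib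

noncomputable section
open MeasureTheory ENNReal
open scoped RealInnerProductSpace

/-- The plane `ℝ²`. -/
abbrev E2 : Type := EuclideanSpace ℝ (Fin 2)

/-- The rotation by 90 degrees: `x^⊥ = (-x₂, x₁)`. -/
def perp (x : E2) : E2 := (WithLp.equiv 2 (Fin 2 → ℝ)).symm ![-(x 1), x 0]

/-- The Aharonov–Bohm kernel `K_R(x) = x^⊥ / (max R ‖x‖)²` (with `K_R 0 = 0`,
also when `R = 0`, by the junk-value convention `(0 : ℝ)⁻¹ = 0`). -/
def K (R : ℝ) (x : E2) : E2 := ((max R ‖x‖) ^ 2)⁻¹ • perp x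

/-- The standard basis of `ℝ²`. -/
def e2 (j : Fin 2) : E2 := EuclideanSpace.single j 1

/-- Componentwise convolution of the vector kernel `K_R` with a scalar density. -/
def convKs (R : ℝ) (ρ : E2 → ℝ) (x : E2) : E2 := ∫ y, ρ y • K R (x - y)

/-- Convolution of the vector kernel `K_R` with a vector field, summed over components. -/
def convKv (R : ℝ) (F : E2 → E2) (x : E2) : ℝ := ∫ y, ⟪K R (x - y), F y⟫

/-- The current `J[u] = i(u∇ū - ū∇u) = 2 Im(ū ∇u)`, an `ℝ²`-valued function. -/
def Jf (u : E2 → ℂ) (x : E2) : E2 :=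
  (WithLp.equiv 2 (Fin 2 → ℝ)).symm fun j =>
    2 * ((starRingEnd ℂ) (u x) * fderiv ℝ u x (e2 j)).im

/-- The `H¹` norm `(‖u‖₂² + ‖∇u‖₂²)^{1/2}` (extended-real valued). -/
def H1 (u : E2 → ℂ) : ℝ≥0∞ :=
  (eLpNorm u 2 volume ^ 2 + eLpNorm (fun x => fderiv ℝ u x) 2 volume ^ 2) ^ (1 / 2 : ℝ)

/-- The `H²` norm `(‖u‖₂² + ‖∇u‖₂² + ‖∇²u‖₂²)^{1/2}` (extended-real valued). -/
def H2 (u : E2 → ℂ) : ℝ≥0∞ :=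
  (eLpNorm u 2 volume ^ 2 + eLpNorm (fun x => fderiv ℝ u x) 2 volume ^ 2
    + eLpNorm (fun x => fderiv ℝ (fderiv ℝ u) x) 2 volume ^ 2) ^ (1 / 2 : ℝ)

/-- Polar coordinates for the lower Lebesgue integral on the plane. -/
lemma aux_polar (f : E2 → ℝ≥0∞) (hf : Measurable f) :
    ∫⁻ x, f x = ∫⁻ θ : Metric.sphere (0 : E2) 1, ∫⁻ r in Set.Ioi (0 : ℝ),
      ENNReal.ofReal r * f (r • (θ : E2)) ∂volume ∂(volume : Measure E2).toSphere := by
  have hmp := (volume : Measure E2).measurePreserving_homeomorphUnitSphereProd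
  have hme : MeasurableEmbedding (homeomorphUnitSphereProd E2) :=
    Homeomorph.measurableEmbedding _
  have h1 : ∫⁻ x, f x = ∫⁻ x : ({0}ᶜ : Set E2), f (x : E2) ∂((volume : Measure E2).comap Subtype.val) := by
    rw [lintegral_subtype_comap (measurableSet_singleton _).compl f,
      restrict_compl_singleton]
  have h2 : ∫⁻ x : ({0}ᶜ : Set E2), f (x : E2) ∂((volume : Measure E2).comap Subtype.val)
      = ∫⁻ p, f ((p.2 : ℝ) • (p.1 : E2)) ∂((volume : Measure E2).toSphere.prod
          (Measure.volumeIoiPow (Module.finrank ℝ E2 - 1))) := by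
    rw [← hmp.lintegral_comp_emb hme]
    refine lintegral_congr fun x => ?_
    have hx : (x : E2) ≠ 0 := x.2
    congr 1
    simp [smul_smul, mul_inv_cancel₀ (norm_ne_zero_iff.2 hx)]
  rw [h1, h2, lintegral_prod]
  · refine lintegral_congr fun θ => ?_
    have hd : Module.finrank ℝ E2 - 1 = 1 := by simp
    rw [hd, Measure.volumeIoiPow, lintegral_withDensity_eq_lintegral_mul]
    · rw [← lintegral_subtype_comap measurableSet_Ioi]
      simp
    · fun_prop
    · fun_prop
  · apply Measurable.aemeasurable
    fun_prop

/-- One-dimensional weighted inequality. -/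
lemma aux_oneD (u : ℝ → ℂ) (hu : Differentiable ℝ u) :
    ∫⁻ r in Set.Ioi (0 : ℝ), ‖u r‖ₑ ^ 2 ≤
      3 * ∫⁻ r in Set.Ioi (0 : ℝ), ENNReal.ofReal r * (‖u r‖ₑ ^ 2 + ‖deriv u r‖ₑ ^ 2) := by
  set I := ∫⁻ r in Set.Ioi (0 : ℝ), ENNReal.ofReal r * (‖u r‖ₑ ^ 2 + ‖deriv u r‖ₑ ^ 2) with hI
  by_cases htop : I = ⊤
  · rw [htop]; simp
  have hcont : Continuous u := hu.continuous
  have hmeas : Measurable (deriv u) := measurable_deriv u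
  have hIeq : I = ∫⁻ r in Set.Ioi (0 : ℝ),
      ENNReal.ofReal (r * (‖u r‖ ^ 2 + ‖deriv u r‖ ^ 2)) := by
    rw [hI]
    refine setLIntegral_congr_fun measurableSet_Ioi fun r hr => ?_
    have hr' : (0 : ℝ) < r := hr
    rw [ENNReal.ofReal_mul hr'.le, ENNReal.ofReal_add (by positivity) (by positivity),
      ENNReal.ofReal_pow (norm_nonneg _), ENNReal.ofReal_pow (norm_nonneg _), ofReal_norm,
      ofReal_norm]
  set w : ℝ → ℝ := fun r => r * (‖u r‖ ^ 2 + ‖deriv u r‖ ^ 2) with hw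
  have hwm : Measurable w := by
    have := hcont.measurable
    fun_prop
  have hwnn : ∀ r ∈ Set.Ioi (0 : ℝ), 0 ≤ w r := by
    intro r hr
    have hr' : (0 : ℝ) < r := hr
    positivity
  have hwint : IntegrableOn w (Set.Ioi 0) := by
    refine ⟨hwm.aestronglyMeasurable, ?_⟩
    rw [hasFiniteIntegral_iff_ofReal
      ((ae_restrict_mem measurableSet_Ioi).mono fun r hr => hwnn r hr), ← hIeq]
    exact lt_top_iff_ne_top.2 htop
  have hw01 : IntegrableOn w (Set.Ioc 0 1) := hwint.mono_set Set.Ioc_subset_Ioi_self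
  -- the derivative of `r (1 - r) ‖u r‖ ^ 2`
  set b : ℝ → ℝ := fun r => r * (1 - r) * (2 * ⟪u r, deriv u r⟫) with hb
  have hbm : Measurable b := by
    have := hcont.measurable
    fun_prop
  have hbw : ∀ r ∈ Set.Ioc (0 : ℝ) 1, |b r| ≤ w r := by
    intro r hr
    have h1 : |⟪u r, deriv u r⟫| ≤ ‖u r‖ * ‖deriv u r‖ := abs_real_inner_le_norm _ _
    have h0 : 0 ≤ r * (1 - r) := mul_nonneg hr.1.le (by linarith [hr.2])
    have h2 : |2 * ⟪u r, deriv u r⟫| ≤ ‖u r‖ ^ 2 + ‖deriv u r‖ ^ 2 := by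
      rw [abs_mul, abs_two]
      nlinarith [sq_nonneg (‖u r‖ - ‖deriv u r‖)]
    calc |b r| = r * (1 - r) * |2 * ⟪u r, deriv u r⟫| := by
          rw [hb]; simp only; rw [abs_mul, abs_of_nonneg h0]
      _ ≤ r * (‖u r‖ ^ 2 + ‖deriv u r‖ ^ 2) := by
          apply mul_le_mul _ h2 (abs_nonneg _) hr.1.le
          nlinarith [hr.1, hr.2]
  have hbint : IntegrableOn b (Set.Ioc 0 1) := by
    refine Integrable.mono' hw01 hbm.aestronglyMeasurable ?_
    filter_upwards [ae_restrict_mem measurableSet_Ioc] with r hr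
    exact hbw r hr
  have hbii : IntervalIntegrable b volume 0 1 :=
    (intervalIntegrable_iff_integrableOn_Ioc_of_le zero_le_one).2 hbint
  have hwii : IntervalIntegrable w volume 0 1 :=
    (intervalIntegrable_iff_integrableOn_Ioc_of_le zero_le_one).2 hw01
  have haii : IntervalIntegrable (fun r => (1 - 2 * r) * ‖u r‖ ^ 2) volume 0 1 :=
    Continuous.intervalIntegrable (by fun_prop) _ _
  have hgii : IntervalIntegrable (fun r => ‖u r‖ ^ 2) volume 0 1 :=
    Continuous.intervalIntegrable (by fun_prop) _ _
  have hftc : ∫ r in (0 : ℝ)..1, ((1 - 2 * r) * ‖u r‖ ^ 2 + b r) = 0 := by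
    have := intervalIntegral.integral_eq_sub_of_hasDerivAt (a := 0) (b := 1)
      (f := fun r : ℝ => r * (1 - r) * ‖u r‖ ^ 2)
      (f' := fun r => (1 - 2 * r) * ‖u r‖ ^ 2 + b r) (fun r _ => ?_) (haii.add hbii)
    · rw [this]; simp
    · have hd := (hu r).hasDerivAt.norm_sq
      have h1 : HasDerivAt (fun r : ℝ => r * (1 - r)) (1 - 2 * r) r := by
        exact ((hasDerivAt_id' r).mul ((hasDerivAt_id' r).const_sub 1)).congr_deriv (by ring)
      exact h1.mul hd
  have hkey : ∫ r in (0 : ℝ)..1, ‖u r‖ ^ 2 ≤ ∫ r in (0 : ℝ)..1, 3 * w r := by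
    have hsub : ∫ r in (0 : ℝ)..1, (‖u r‖ ^ 2 - ((1 - 2 * r) * ‖u r‖ ^ 2 + b r))
        = ∫ r in (0 : ℝ)..1, ‖u r‖ ^ 2 := by
      rw [intervalIntegral.integral_sub hgii (haii.add hbii), hftc, sub_zero]
    rw [← hsub]
    refine intervalIntegral.integral_mono_ae_restrict zero_le_one
      (hgii.sub (haii.add hbii)) (hwii.const_mul 3) ?_
    rw [Measure.restrict_congr_set Ioc_ae_eq_Icc.symm]
    filter_upwards [ae_restrict_mem measurableSet_Ioc] with r hr
    have h1 := (abs_le.1 (hbw r hr)).1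
    have h2 : r * ‖u r‖ ^ 2 ≤ w r := by
      rw [hw]; simp only
      have := hr.1
      gcongr
      nlinarith [sq_nonneg ‖deriv u r‖]
    nlinarith
  have hpart1 : ∫⁻ r in Set.Ioc (0 : ℝ) 1, ‖u r‖ₑ ^ 2 ≤
      ∫⁻ r in Set.Ioc (0 : ℝ) 1, ENNReal.ofReal (3 * w r) := by
    have e1 : ∫⁻ r in Set.Ioc (0 : ℝ) 1, ‖u r‖ₑ ^ 2
        = ENNReal.ofReal (∫ r in Set.Ioc (0 : ℝ) 1, ‖u r‖ ^ 2) := by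
      rw [ofReal_integral_eq_lintegral_ofReal]
      · refine lintegral_congr fun r => ?_
        rw [ENNReal.ofReal_pow (norm_nonneg _), ofReal_norm]
      · exact (intervalIntegrable_iff_integrableOn_Ioc_of_le zero_le_one).1 hgii
      · exact Filter.Eventually.of_forall fun r => by positivity
    have e2 : ∫⁻ r in Set.Ioc (0 : ℝ) 1, ENNReal.ofReal (3 * w r)
        = ENNReal.ofReal (∫ r in Set.Ioc (0 : ℝ) 1, 3 * w r) := by
      rw [ofReal_integral_eq_lintegral_ofReal]
      · exact hw01.const_mul 3
      · filter_upwards [ae_restrict_mem measurableSet_Ioc] with r hr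
        have := hwnn r hr.1
        simp only [Pi.zero_apply]
        positivity
    rw [e1, e2, ← intervalIntegral.integral_of_le zero_le_one,
      ← intervalIntegral.integral_of_le zero_le_one]
    exact ENNReal.ofReal_le_ofReal hkey
  have hpart2 : ∫⁻ r in Set.Ioi (1 : ℝ), ‖u r‖ₑ ^ 2 ≤
      ∫⁻ r in Set.Ioi (1 : ℝ), ENNReal.ofReal (3 * w r) := by
    refine setLIntegral_mono (by fun_prop) fun r hr => ?_
    have hr' : (1 : ℝ) < r := hr
    rw [← ofReal_norm, ← ENNReal.ofReal_pow (norm_nonneg _)]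
    apply ENNReal.ofReal_le_ofReal
    rw [hw]; simp only
    nlinarith [sq_nonneg ‖deriv u r‖, sq_nonneg ‖u r‖,
      mul_nonneg (sub_nonneg.2 hr'.le) (sq_nonneg ‖u r‖),
      mul_nonneg (sub_nonneg.2 hr'.le) (sq_nonneg ‖deriv u r‖)]
  have hsplit : Set.Ioi (0 : ℝ) = Set.Ioc 0 1 ∪ Set.Ioi 1 :=
    (Set.Ioc_union_Ioi_eq_Ioi zero_le_one).symm
  have hdisj : Disjoint (Set.Ioc (0 : ℝ) 1) (Set.Ioi 1) := Set.Ioc_disjoint_Ioi le_rfl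
  have h3 : 3 * I = ∫⁻ r in Set.Ioi (0 : ℝ), ENNReal.ofReal (3 * w r) := by
    rw [hIeq, ← lintegral_const_mul _ (by fun_prop)]
    refine lintegral_congr fun r => ?_
    rw [ENNReal.ofReal_mul (p := 3) (by norm_num), show ENNReal.ofReal 3 = 3 by simp]
  rw [h3, hsplit, lintegral_union measurableSet_Ioi hdisj, lintegral_union measurableSet_Ioi hdisj]
  exact add_le_add hpart1 hpart2

/-- Hardy-type inequality at the origin. -/
lemma aux_hardy0 (ψ : E2 → ℂ) (hψ : Differentiable ℝ ψ) :
    ∫⁻ z, ‖ψ z‖ₑ ^ 2 * ‖z‖ₑ⁻¹ ≤ 3 * ∫⁻ z, (‖ψ z‖ₑ ^ 2 + ‖fderiv ℝ ψ z‖ₑ ^ 2) := by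
  have hψm : Measurable ψ := hψ.continuous.measurable
  have hdm : Measurable (fderiv ℝ ψ) := measurable_fderiv ℝ ψ
  rw [aux_polar (fun z => ‖ψ z‖ₑ ^ 2 * ‖z‖ₑ⁻¹) (by fun_prop),
    aux_polar (fun z => ‖ψ z‖ₑ ^ 2 + ‖fderiv ℝ ψ z‖ₑ ^ 2) (by fun_prop),
    ← lintegral_const_mul' _ _ (by simp)]
  refine lintegral_mono fun θ => ?_
  have hθ : ‖(θ : E2)‖ = 1 := by simp
  set u : ℝ → ℂ := fun r => ψ (r • (θ : E2)) with hu
  have hder : ∀ r, HasDerivAt u (fderiv ℝ ψ (r • (θ : E2)) θ) r := by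
    intro r
    have h1 : HasDerivAt (fun r : ℝ => r • (θ : E2)) (θ : E2) r := by
      simpa using (hasDerivAt_id r).smul_const (θ : E2)
    exact (hψ _).hasFDerivAt.comp_hasDerivAt r h1
  have hud : Differentiable ℝ u := fun r => (hder r).differentiableAt
  calc ∫⁻ r in Set.Ioi (0 : ℝ), ENNReal.ofReal r * (‖ψ (r • (θ : E2))‖ₑ ^ 2 * ‖r • (θ : E2)‖ₑ⁻¹)
      = ∫⁻ r in Set.Ioi (0 : ℝ), ‖u r‖ₑ ^ 2 := by
        refine setLIntegral_congr_fun measurableSet_Ioi fun r hr => ?_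
        have hr' : (0 : ℝ) < r := hr
        have : ‖r • (θ : E2)‖ₑ = ENNReal.ofReal r := by
          rw [← ofReal_norm, norm_smul, hθ, mul_one, Real.norm_of_nonneg hr'.le]
        simp only [this]
        rw [mul_comm, mul_assoc, ENNReal.inv_mul_cancel (by simpa using hr') (by simp), mul_one]
    _ ≤ _ := aux_oneD u hud
    _ ≤ _ := by
        gcongr with r
        rw [(hder r).deriv]
        have := (fderiv ℝ ψ (r • (θ : E2))).le_opNorm θ
        rw [hθ, mul_one] at this
        exact enorm_le_iff_norm_le.2 this

lemma aux_hardy (φ : E2 → ℂ) (hφ : Differentiable ℝ φ) (x : E2) :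
    ∫⁻ y, ‖φ y‖ₑ ^ 2 * ‖x - y‖ₑ⁻¹ ≤ 3 * ∫⁻ z, (‖φ z‖ₑ ^ 2 + ‖fderiv ℝ φ z‖ₑ ^ 2) := by
  have h := aux_hardy0 (fun z => φ (z + x)) (hφ.comp (by fun_prop))
  simp only [fderiv_comp_add_right] at h
  rw [lintegral_add_right_eq_self (fun z => ‖φ z‖ₑ ^ 2 + ‖fderiv ℝ φ z‖ₑ ^ 2) x] at h
  refine le_trans (le_of_eq ?_) h
  rw [← lintegral_add_right_eq_self _ x]
  refine lintegral_congr fun z => ?_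
  congr 2
  rw [show x - (z + x) = -z by abel, enorm_neg]

lemma aux_H1_sq (φ : E2 → ℂ) (hφ : Differentiable ℝ φ) :
    ∫⁻ z, (‖φ z‖ₑ ^ 2 + ‖fderiv ℝ φ z‖ₑ ^ 2) = H1 φ ^ 2 := by
  have hm : Measurable φ := hφ.continuous.measurable
  have key : H1 φ ^ 2 = eLpNorm φ 2 volume ^ 2 + eLpNorm (fun x => fderiv ℝ φ x) 2 volume ^ 2 := by
    rw [H1, ← ENNReal.rpow_natCast, ← ENNReal.rpow_mul]
    norm_num
  have h2 : ∀ {F : Type} [NormedAddCommGroup F] (g : E2 → F),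
      eLpNorm g 2 volume ^ 2 = ∫⁻ z, ‖g z‖ₑ ^ 2 := by
    intro F _ g
    rw [eLpNorm_eq_lintegral_rpow_enorm_toReal (by norm_num) (by norm_num), ← ENNReal.rpow_natCast,
      ← ENNReal.rpow_mul]
    norm_num
  rw [key, h2, h2, lintegral_add_left (by fun_prop)]

lemma aux_perp (x : E2) : ‖perp x‖ = ‖x‖ := by
  simp [perp, EuclideanSpace.norm_eq, Fin.sum_univ_two, add_comm]

lemma aux_K (R : ℝ) (x : E2) : ‖K R x‖ₑ ≤ ‖x‖ₑ⁻¹ := by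
  by_cases hx : x = 0
  · simp [hx]
  have hx' : 0 < ‖x‖ := norm_pos_iff.2 hx
  have hM : 0 < max R ‖x‖ := lt_max_of_lt_right hx'
  rw [← ofReal_norm, ← ofReal_norm, ← ENNReal.ofReal_inv_of_pos hx']
  apply ENNReal.ofReal_le_ofReal
  rw [K, norm_smul, aux_perp, norm_inv, norm_pow, Real.norm_of_nonneg hM.le,
    inv_mul_le_iff₀ (by positivity), ← div_eq_mul_inv, le_div_iff₀ hx', ← sq]
  gcongr
  exact le_max_right _ _

lemma aux_convKs (R : ℝ) (φ : E2 → ℂ) (hφ : Differentiable ℝ φ) (x : E2) :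
    ‖convKs R (fun y => ‖φ y‖ ^ 2) x‖ₑ ≤ 3 * H1 φ ^ 2 := by
  rw [← aux_H1_sq φ hφ]
  refine le_trans ?_ (aux_hardy φ hφ x)
  refine (enorm_integral_le_lintegral_enorm _).trans (lintegral_mono fun y => ?_)
  simp only [enorm_smul, enorm_pow, enorm_norm]
  gcongr
  exact aux_K _ _

lemma aux_convKv (R : ℝ) (φ : E2 → ℂ) (hφ : Differentiable ℝ φ) (hfin : H1 φ < ⊤) (x : E2) :
    ‖convKv R (fun y => ‖φ y‖ ^ 2 • convKs R (fun y' => ‖φ y'‖ ^ 2) y) x‖ₑ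
      ≤ (3 * H1 φ ^ 2) * (3 * H1 φ ^ 2) := by
  have hA := aux_hardy φ hφ x
  rw [aux_H1_sq φ hφ] at hA
  refine le_trans ?_ (mul_le_mul_right hA (3 * H1 φ ^ 2))
  rw [← lintegral_const_mul' _ _ (by finiteness)]
  refine (enorm_integral_le_lintegral_enorm _).trans (lintegral_mono fun y => ?_)
  calc _ ≤ ‖K R (x - y)‖ₑ * ‖‖φ y‖ ^ 2 • convKs R (fun y' => ‖φ y'‖ ^ 2) y‖ₑ := by
        simp only [← ofReal_norm]
        rw [← ENNReal.ofReal_mul (norm_nonneg _)]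
        exact ENNReal.ofReal_le_ofReal (norm_inner_le_norm _ _)
    _ ≤ ‖x - y‖ₑ⁻¹ * (‖φ y‖ₑ ^ 2 * (3 * H1 φ ^ 2)) := by
        simp only [enorm_smul, enorm_pow, enorm_norm]
        gcongr
        · exact aux_K _ _
        · exact aux_convKs R φ hφ y
    _ = _ := by ring

/-- Estimate (2.25): there is `C > 0` such that for every `R ≥ 0` and every
`φ ∈ H¹(ℝ², ℂ)`, the function
`w'φ = ‖K_R ∗ |φ|²‖² φ + 2 (K_R ∗ ((K_R ∗ |φ|²)|φ|²)) φ` satisfies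
`‖w'φ‖₂ ≤ C ‖φ‖_{H¹}⁵`. -/
theorem statement11 :
    ∃ C : ℝ, 0 < C ∧ ∀ R : ℝ, 0 ≤ R →
      ∀ φ : E2 → ℂ, Differentiable ℝ φ → H1 φ < ⊤ →
        eLpNorm
            (fun x =>
              (↑(‖convKs R (fun y => ‖φ y‖ ^ 2) x‖ ^ 2) : ℂ) * φ x
                + 2 * (↑(convKv R
                    (fun y => ‖φ y‖ ^ 2 • convKs R (fun y' => ‖φ y'‖ ^ 2) y) x) : ℂ) * φ x)
            2 volume
          ≤ ENNReal.ofReal C * H1 φ ^ 5 := by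
  refine ⟨27, by norm_num, fun R _ φ hφ hfin => ?_⟩
  have hle : eLpNorm φ 2 volume ≤ H1 φ := by
    have h1 : eLpNorm φ 2 volume = (eLpNorm φ 2 volume ^ 2) ^ (1 / 2 : ℝ) := by
      rw [← ENNReal.rpow_natCast, ← ENNReal.rpow_mul]
      norm_num
    rw [h1, H1]
    exact ENNReal.rpow_le_rpow le_self_add (by norm_num)
  have hmain := eLpNorm_le_mul_eLpNorm_of_ae_le_mul'' (μ := (volume : Measure E2))
    (f := fun x =>
              (↑(‖convKs R (fun y => ‖φ y‖ ^ 2) x‖ ^ 2) : ℂ) * φ x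
                + 2 * (↑(convKv R
                    (fun y => ‖φ y‖ ^ 2 • convKs R (fun y' => ‖φ y'‖ ^ 2) y) x) : ℂ) * φ x)
    (g := φ) (c := 27 * H1 φ ^ 4) 2 hφ.continuous.aestronglyMeasurable
    (Filter.Eventually.of_forall fun x => ?_)
  · refine hmain.trans ?_
    calc 27 * H1 φ ^ 4 * eLpNorm φ 2 volume ≤ 27 * H1 φ ^ 4 * H1 φ := by gcongr
      _ = ENNReal.ofReal 27 * H1 φ ^ 5 := by
        rw [show ENNReal.ofReal 27 = 27 by simp]; ring
  · have h1 := aux_convKs R φ hφ x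
    have h2 := aux_convKv R φ hφ hfin x
    have e2 : ‖(2 : ℂ)‖ₑ = 2 := by rw [← ofReal_norm]; simp
    have er : ∀ t : ℝ, ‖(t : ℂ)‖ₑ = ‖t‖ₑ := fun t => by
      rw [← ofReal_norm, ← ofReal_norm, Complex.norm_real]
    refine (enorm_add_le _ _).trans ?_
    simp only [enorm_mul, er, e2, enorm_pow, enorm_norm]
    calc _ ≤ (3 * H1 φ ^ 2) ^ 2 * ‖φ x‖ₑ
          + 2 * ((3 * H1 φ ^ 2) * (3 * H1 φ ^ 2)) * ‖φ x‖ₑ := by gcongr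
      _ = _ := by ring
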